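/- (Interlacing necessity for finite structure under row completion.) Let R(s) ∈ F(s)^{m×n} have rank r and invariant rational functions η_1/φ_1, …, η_r/φ_r. Suppose W̃(s) ∈ F(s)^{z×n} is such that Q(s) = [R(s); W̃(s)] has rank r + x (0 ≤ x ≤ min{z, n−r}) and invariant rational functions ε_1/ψ_1, …, ε_{r+x}/ψ_{r+x}. Then ε_i(s) | η_i(s) | ε_{i+z}(s) and ψ_{i+z}(s) | φ_i(s) | ψ_i(s) for all 1 ≤ i ≤ r, with the conventions ε_j(s) = 0 and ψ_j(s) = 1 for j > r + x. -/

import Mathlib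

open Finset Polynomial

noncomputable section

open scoped Classical

variable {F : Type*} [Field F]

/-- The natural inclusion of polynomials into rational functions. -/
def ratOf {F : Type*} [Field F] (q : Polynomial F) : RatFunc F :=
  algebraMap (Polynomial F) (RatFunc F) q

/-- A polynomial vector, viewed as a vector of rational functions. -/
def polyVec {F : Type*} [Field F] {ι : Type*} (B : ι → Polynomial F) : ι → RatFunc F :=
  fun j => ratOf (B j)

/-- The degree of a polynomial vector: the maximum of the degrees of its entries. -/
def vecDeg {F : Type*} [Field F] {ι : Type*} [Fintype ι] (B : ι → Polynomial F) : ℕ :=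
  Finset.univ.sup fun j => (B j).natDegree

/-- `B` is a polynomial basis of the subspace `V` of `ι → F(s)`. -/
def IsPolyBasisOf {F : Type*} [Field F] {ι : Type*} [Fintype ι]
    (V : Submodule (RatFunc F) (ι → RatFunc F)) {k : ℕ}
    (B : Fin k → ι → Polynomial F) : Prop :=
  LinearIndependent (RatFunc F) (fun i => polyVec (B i)) ∧
  Submodule.span (RatFunc F) (Set.range fun i => polyVec (B i)) = V

/-- `B` is a minimal (least order) polynomial basis of `V`. -/
def IsMinimalBasisOf {F : Type*} [Field F] {ι : Type*} [Fintype ι]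
    (V : Submodule (RatFunc F) (ι → RatFunc F)) {k : ℕ}
    (B : Fin k → ι → Polynomial F) : Prop :=
  IsPolyBasisOf V B ∧
  ∀ (B' : Fin k → ι → Polynomial F), IsPolyBasisOf V B' →
    ∑ i, vecDeg (B i) ≤ ∑ i, vecDeg (B' i)

/-- The multiset `c` is the multiset of minimal indices of the subspace `V`. -/
def HasMinIndices {F : Type*} [Field F] {ι : Type*} [Fintype ι]
    (V : Submodule (RatFunc F) (ι → RatFunc F)) (c : Multiset ℕ) : Prop :=
  ∃ (k : ℕ) (B : Fin k → ι → Polynomial F), IsMinimalBasisOf V B ∧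
    Multiset.map (fun i => vecDeg (B i)) Finset.univ.val = c

/-- The right null-space of a rational matrix. -/
def rightNull {F : Type*} [Field F] {ιr ιc : Type*} [Fintype ιr] [Fintype ιc]
    (R : Matrix ιr ιc (RatFunc F)) : Submodule (RatFunc F) (ιc → RatFunc F) :=
  LinearMap.ker R.mulVecLin

/-- The left null-space of a rational matrix. -/
def leftNull {F : Type*} [Field F] {ιr ιc : Type*} [Fintype ιr] [Fintype ιc]
    (R : Matrix ιr ιc (RatFunc F)) : Submodule (RatFunc F) (ιr → RatFunc F) :=
  LinearMap.ker R.transpose.mulVecLin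

/-- `c` is the multiset of column minimal indices of `R`. -/
def HasColMinIndices {F : Type*} [Field F] {ιr ιc : Type*} [Fintype ιr] [Fintype ιc]
    (R : Matrix ιr ιc (RatFunc F)) (c : Multiset ℕ) : Prop :=
  HasMinIndices (rightNull R) c

/-- `u` is the multiset of row minimal indices of `R`. -/
def HasRowMinIndices {F : Type*} [Field F] {ιr ιc : Type*} [Fintype ιr] [Fintype ιc]
    (R : Matrix ιr ιc (RatFunc F)) (u : Multiset ℕ) : Prop :=
  HasMinIndices (leftNull R) u

/-- A square polynomial matrix is unimodular if its determinant is a unit (a nonzero constant). -/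
def IsUnimodular {F : Type*} [Field F] {k : Type*} [Fintype k] [DecidableEq k]
    (U : Matrix k k (Polynomial F)) : Prop :=
  IsUnit U.det

/-- The Smith–McMillan diagonal form with invariant rational functions ε_i/ψ_i (1-indexed). -/
def smDiag {F : Type*} [Field F] (m n r : ℕ) (ε ψ : ℕ → Polynomial F) :
    Matrix (Fin m) (Fin n) (RatFunc F) :=
  Matrix.of fun i j =>
    if (i : ℕ) = (j : ℕ) ∧ (i : ℕ) < r then ratOf (ε ((i : ℕ) + 1)) / ratOf (ψ ((i : ℕ) + 1)) else 0

/-- `R` has rank `r` (implicitly) and invariant rational functions ε_1/ψ_1, …, ε_r/ψ_r: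
the ε's and ψ's form monic divisibility chains with each ε_i/ψ_i irreducible, and `R` is
unimodularly equivalent to the Smith–McMillan form. -/
def HasInvRatFns {F : Type*} [Field F] {m n : ℕ} (R : Matrix (Fin m) (Fin n) (RatFunc F))
    (r : ℕ) (ε ψ : ℕ → Polynomial F) : Prop :=
  (∀ i, 1 ≤ i → i ≤ r → (ε i).Monic ∧ (ψ i).Monic ∧ IsCoprime (ε i) (ψ i)) ∧
  (∀ i, 1 ≤ i → i < r → ε i ∣ ε (i + 1) ∧ ψ (i + 1) ∣ ψ i) ∧
  ∃ (U : Matrix (Fin m) (Fin m) (Polynomial F)) (V : Matrix (Fin n) (Fin n) (Polynomial F)),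
    IsUnimodular U ∧ IsUnimodular V ∧
    (U.map ratOf) * R * (V.map ratOf) = smDiag m n r ε ψ

/-- `P` has invariant factors η_1 | … | η_r : it is unimodularly equivalent to its
Smith normal form. -/
def HasInvFactors {F : Type*} [Field F] {m n : ℕ} (P : Matrix (Fin m) (Fin n) (Polynomial F))
    (r : ℕ) (η : ℕ → Polynomial F) : Prop :=
  (∀ i, 1 ≤ i → i ≤ r → (η i).Monic) ∧
  (∀ i, 1 ≤ i → i < r → η i ∣ η (i + 1)) ∧
  ∃ (U : Matrix (Fin m) (Fin m) (Polynomial F)) (V : Matrix (Fin n) (Fin n) (Polynomial F)),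
    IsUnimodular U ∧ IsUnimodular V ∧
    U * P * V = Matrix.of fun (i : Fin m) (j : Fin n) =>
      if (i : ℕ) = (j : ℕ) ∧ (i : ℕ) < r then η ((i : ℕ) + 1) else 0

/-- A rational function is proper if the degree of its numerator is at most that of
its denominator. -/
def IsProper {F : Type*} [Field F] (f : RatFunc F) : Prop :=
  f.num.degree ≤ f.denom.degree

/-- A square rational matrix is biproper if it is proper and has a proper inverse. -/
def IsBiproper {F : Type*} [Field F] {k : Type*} [Fintype k] [DecidableEq k]
    (B : Matrix k k (RatFunc F)) : Prop :=
  (∀ i j, IsProper (B i j)) ∧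
  ∃ C : Matrix k k (RatFunc F), (∀ i j, IsProper (C i j)) ∧ B * C = 1 ∧ C * B = 1

/-- The Smith–McMillan form at infinity `diag(s^{-q_1}, …, s^{-q_r})` padded with zeros. -/
def smInfDiag {F : Type*} [Field F] (m n r : ℕ) (q : ℕ → ℤ) :
    Matrix (Fin m) (Fin n) (RatFunc F) :=
  Matrix.of fun i j =>
    if (i : ℕ) = (j : ℕ) ∧ (i : ℕ) < r then (RatFunc.X : RatFunc F) ^ (-(q ((i : ℕ) + 1))) else 0

/-- `R` has invariant orders at infinity q_1 ≤ … ≤ q_r : it is biproperly equivalent to the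
Smith–McMillan form at infinity. -/
def HasInfOrders {F : Type*} [Field F] {m n : ℕ} (R : Matrix (Fin m) (Fin n) (RatFunc F))
    (r : ℕ) (q : ℕ → ℤ) : Prop :=
  (∀ i, 1 ≤ i → i < r → q i ≤ q (i + 1)) ∧
  ∃ (B₁ : Matrix (Fin m) (Fin m) (RatFunc F)) (B₂ : Matrix (Fin n) (Fin n) (RatFunc F)),
    IsBiproper B₁ ∧ IsBiproper B₂ ∧ B₁ * R * B₂ = smInfDiag m n r q

/-- Stacking a `z × n` block below an `m × n` matrix. -/
def stack {α : Type*} {m z n : ℕ} (R : Matrix (Fin m) (Fin n) α)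
    (W : Matrix (Fin z) (Fin n) α) : Matrix (Fin (m + z)) (Fin n) α :=
  Matrix.of fun i j =>
    if h : (i : ℕ) < m then R ⟨i, h⟩ j
    else W ⟨(i : ℕ) - m, by have := i.isLt; omega⟩ j

/-- The matrix `p(s)·R(s)` obtained by multiplying every entry of `R` by the polynomial `p`. -/
def polySmul {F : Type*} [Field F] {ιr ιc : Type*} (p : Polynomial F)
    (R : Matrix ιr ιc (RatFunc F)) : Matrix ιr ιc (RatFunc F) :=
  Matrix.of fun i j => ratOf p * R i j

section Approximation

variable {D K : Type*} [CommRing D] [Field K] [Algebra D K] {m n : ℕ}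

/-- `A` agrees with a matrix of rank at most `k` up to a `D`-integral matrix scaled by `g`. -/
def HasRankApprox (D : Type*) {K : Type*} [CommRing D] [Field K] [Algebra D K] {m n : ℕ}
    (A : Matrix (Fin m) (Fin n) K) (k : ℕ) (g : K) : Prop :=
  ∃ (B : Matrix (Fin m) (Fin n) K) (C : Matrix (Fin m) (Fin n) D),
    B.rank ≤ k ∧ A = B + g • C.map (algebraMap D K)

theorem HasRankApprox.mul_left {l : ℕ} {A : Matrix (Fin m) (Fin n) K} {k : ℕ} {g : K}
    (h : HasRankApprox D A k g) (U : Matrix (Fin l) (Fin m) D) :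
    HasRankApprox D (U.map (algebraMap D K) * A) k g := by
  obtain ⟨B, C, hB, rfl⟩ := h
  refine ⟨U.map (algebraMap D K) * B, U * C, (Matrix.rank_mul_le_right _ _).trans hB, ?_⟩
  rw [Matrix.mul_add, Matrix.mul_smul, Matrix.map_mul]

theorem HasRankApprox.mul_right {l : ℕ} {A : Matrix (Fin m) (Fin n) K} {k : ℕ} {g : K}
    (h : HasRankApprox D A k g) (V : Matrix (Fin n) (Fin l) D) :
    HasRankApprox D (A * V.map (algebraMap D K)) k g := by
  obtain ⟨B, C, hB, rfl⟩ := h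
  refine ⟨B * V.map (algebraMap D K), C * V, (Matrix.rank_mul_le_left _ _).trans hB, ?_⟩
  rw [Matrix.add_mul, Matrix.smul_mul, Matrix.map_mul]

theorem Matrix.rank_add_le_add (A B : Matrix (Fin m) (Fin n) K) :
    (A + B).rank ≤ A.rank + B.rank := by
  refine le_trans (Submodule.finrank_mono ?_)
    (Submodule.finrank_add_le_finrank_add_finrank (LinearMap.range A.mulVecLin)
      (LinearMap.range B.mulVecLin))
  rw [Matrix.mulVecLin_add]
  exact LinearMap.range_add_le _ _

theorem HasRankApprox.add_rank {A : Matrix (Fin m) (Fin n) K} {k l : ℕ} {g : K}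
    (h : HasRankApprox D A k g) {N : Matrix (Fin m) (Fin n) K} (hN : N.rank ≤ l) :
    HasRankApprox D (A + N) (k + l) g := by
  obtain ⟨B, C, hB, rfl⟩ := h
  exact ⟨B + N, C, (Matrix.rank_add_le_add _ _).trans (add_le_add hB hN), by abel⟩

/-- The `m × n` matrix with diagonal entries `a 0, …, a (r - 1)` padded with zeros. -/
def rectDiagonal {K : Type*} [Zero K] (m n r : ℕ) (a : ℕ → K) : Matrix (Fin m) (Fin n) K :=
  Matrix.of fun i j => if (i : ℕ) = (j : ℕ) ∧ (i : ℕ) < r then a i else 0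

theorem hasRankApprox_rectDiagonal {r k : ℕ} {a : ℕ → K}
    (hdvd : ∀ j, k ≤ j → j < r → ∃ p : D, a j = a k * algebraMap D K p) :
    HasRankApprox D (rectDiagonal m n r a) k (a k) := by
  choose! p hp using hdvd
  refine ⟨Matrix.diagonal (fun i : Fin m => if (i : ℕ) < k then 1 else 0) * rectDiagonal m n r a,
    rectDiagonal m n r fun j => if j < k then 0 else p j,
    (Matrix.rank_mul_le_left _ _).trans ?_, ?_⟩
  · rw [Matrix.rank_diagonal]
    calc _ ≤ Fintype.card (Fin k) :=
          Fintype.card_le_of_injective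
            (fun i : {i : Fin m // (if (i : ℕ) < k then (1 : K) else 0) ≠ 0} =>
              (⟨i.1, by by_contra h; exact i.2 (if_neg h)⟩ : Fin k))
            fun i j h => Subtype.ext (Fin.ext (by simpa using h))
      _ = k := Fintype.card_fin k
  · ext i j
    simp only [Matrix.add_apply, Matrix.diagonal_mul, Matrix.smul_apply, Matrix.map_apply,
      rectDiagonal, Matrix.of_apply, smul_eq_mul]
    by_cases hij : (i : ℕ) = j ∧ (i : ℕ) < r
    · by_cases hk : (i : ℕ) < k
      · simp [if_pos hij, hk]
      · simp [if_pos hij, hk, ← hp i (not_lt.mp hk) hij.2]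
    · simp [if_neg hij]

theorem hasRankApprox_of_equiv_rectDiagonal {r k : ℕ} {a : ℕ → K}
    (hdvd : ∀ j, k ≤ j → j < r → ∃ p : D, a j = a k * algebraMap D K p)
    {A : Matrix (Fin m) (Fin n) K} {U : Matrix (Fin m) (Fin m) D} {V : Matrix (Fin n) (Fin n) D}
    (hU : IsUnit U.det) (hV : IsUnit V.det)
    (h : U.map (algebraMap D K) * A * V.map (algebraMap D K) = rectDiagonal m n r a) :
    HasRankApprox D A k (a k) := by
  have key := ((hasRankApprox_rectDiagonal (m := m) (n := n) hdvd).mul_left U⁻¹).mul_right V⁻¹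
  have hA : U⁻¹.map (algebraMap D K) * rectDiagonal m n r a * V⁻¹.map (algebraMap D K) = A := by
    have h₁ : U⁻¹.map (algebraMap D K) * U.map (algebraMap D K) = 1 := by
      rw [← Matrix.map_mul, Matrix.nonsing_inv_mul _ hU]; simp
    have h₂ : V.map (algebraMap D K) * V⁻¹.map (algebraMap D K) = 1 := by
      rw [← Matrix.map_mul, Matrix.mul_nonsing_inv _ hV]; simp
    rw [← h, Matrix.mul_assoc, Matrix.mul_assoc, h₂, Matrix.mul_one, ← Matrix.mul_assoc, h₁,
      Matrix.one_mul]
  rwa [hA] at key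

/-- A matrix over the fraction field of a PID of rank less than its number of columns kills a primitive
integral vector. -/
theorem exists_primitive_mulVec_eq_zero [IsDomain D] [IsPrincipalIdealRing D]
    [IsFractionRing D K] {B : Matrix (Fin m) (Fin n) K} (hB : B.rank < n) :
    ∃ u w : Fin n → D, B.mulVec (fun j => algebraMap D K (u j)) = 0 ∧ ∑ j, w j * u j = 1 := by
  obtain ⟨v, hv0, hv⟩ : ∃ v : Fin n → K, v ≠ 0 ∧ B.mulVec v = 0 := by
    have : LinearMap.ker B.mulVecLin.rangeRestrict ≠ ⊥ :=
      LinearMap.ker_ne_bot_of_finrank_lt (by simpa [Matrix.rank] using hB)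
    rw [LinearMap.ker_rangeRestrict] at this
    obtain ⟨v, hv, hv0⟩ := Submodule.exists_mem_ne_zero_of_ne_bot this
    exact ⟨v, hv0, by simpa using hv⟩
  obtain ⟨b, hb⟩ := IsLocalization.exist_integer_multiples_of_finite (nonZeroDivisors D) v
  choose q hq using hb
  have hb0 : algebraMap D K b ≠ 0 := IsFractionRing.to_map_ne_zero_of_mem_nonZeroDivisors b.2
  obtain ⟨d, hd⟩ := IsPrincipalIdealRing.principal (Ideal.span (Set.range q))
  have hdvd : ∀ j, ∃ c, q j = d * c := fun j => by
    have : q j ∈ Ideal.span (Set.range q) := Ideal.subset_span ⟨j, rfl⟩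
    rw [hd] at this
    exact Ideal.mem_span_singleton.mp this
  choose u hu using hdvd
  obtain ⟨w, hw⟩ : ∃ w : Fin n → D, ∑ j, w j * q j = d := by
    have : d ∈ Ideal.span (Set.range q) := by rw [hd]; exact Submodule.mem_span_singleton_self d
    simpa [Ideal.mem_span_range_iff_exists_fun] using this
  have hd0 : d ≠ 0 := by
    rintro rfl
    refine hv0 (funext fun j => ?_)
    have := hq j
    rw [hu j, zero_mul, map_zero, Algebra.smul_def] at this
    simpa [hb0] using this.symm
  have hd0' : algebraMap D K d ≠ 0 := by simpa using hd0
  refine ⟨u, w, ?_, ?_⟩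
  · have huv : (fun j => algebraMap D K (u j)) = (algebraMap D K b / algebraMap D K d) • v := by
      funext j
      have := hq j
      rw [hu j, map_mul, Algebra.smul_def] at this
      simp only [Pi.smul_apply, smul_eq_mul]
      field_simp
      linear_combination this
    rw [huv, Matrix.mulVec_smul, hv, smul_zero]
  · refine mul_left_cancel₀ hd0 ?_
    rw [mul_one, Finset.mul_sum]
    conv_rhs => rw [← hw]
    exact Finset.sum_congr rfl fun j _ => by rw [hu j]; ring

/-- If `rectDiagonal m n r a` is within `g` times an integral matrix of a matrix of rank at most
`k`, then `g` divides the entry of index `k`. -/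
theorem HasRankApprox.dvd_of_rectDiagonal [IsDomain D] [IsPrincipalIdealRing D]
    [IsFractionRing D K] {r k : ℕ} {a : ℕ → K} {g : K} (hk : k < r) (hm : r ≤ m) (hn : r ≤ n)
    (hdvd : ∀ j, j ≤ k → ∃ p : D, a k = a j * algebraMap D K p)
    (h : HasRankApprox D (rectDiagonal m n r a) k g) :
    ∃ p : D, a k = g * algebraMap D K p := by
  obtain ⟨B, C, hB, hBC⟩ := h
  let E : Fin (k + 1) → Fin n := Fin.castLE (by omega)
  have hrank : (B.submatrix id E).rank < k + 1 := by
    refine Nat.lt_succ_of_le (le_trans ?_ hB)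
    have : B.submatrix id E = B * (1 : Matrix (Fin n) (Fin n) K).submatrix id E := by
      ext i j
      simp [Matrix.mul_apply, Matrix.one_apply]
    rw [this]
    exact Matrix.rank_mul_le_left _ _
  obtain ⟨u, w, hu, hw⟩ := exists_primitive_mulVec_eq_zero (D := D) hrank
  choose! p hp using hdvd
  have hrow : ∀ j : Fin (k + 1), a j * algebraMap D K (u j) =
      g * algebraMap D K (∑ l, C (Fin.castLE (by omega) j) (E l) * u l) := fun j => by
    have h0 := congrFun hu (Fin.castLE (by omega) j)
    have h1 : ∀ l, rectDiagonal m n r a (Fin.castLE (by omega) j) (E l) * algebraMap D K (u l) =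
        B (Fin.castLE (by omega) j) (E l) * algebraMap D K (u l) +
        g * algebraMap D K (C (Fin.castLE (by omega) j) (E l) * u l) := fun l => by
      rw [hBC]
      simp only [Matrix.add_apply, Matrix.smul_apply, Matrix.map_apply, smul_eq_mul, map_mul]
      ring
    have h2 := Finset.sum_congr (rfl : Finset.univ = Finset.univ) fun l _ => h1 l
    rw [Finset.sum_add_distrib] at h2
    have h0' : ∑ l, B (Fin.castLE (by omega) j) (E l) * algebraMap D K (u l) = 0 := h0
    rw [h0', zero_add, ← Finset.mul_sum, ← map_sum, Finset.sum_eq_single j] at h2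
    · rw [← h2]
      have : (j : ℕ) < r := by omega
      simp [rectDiagonal, E, this]
    · intro l _ hl
      have : ¬ (j : ℕ) = l := fun h => hl (Fin.ext h.symm)
      simp [rectDiagonal, E, this]
    · simp
  refine ⟨∑ j : Fin (k + 1),
    w j * (p j * ∑ l, C (Fin.castLE (by omega) j) (E l) * u l), ?_⟩
  calc a k = a k * algebraMap D K (∑ j, w j * u j) := by rw [hw, map_one, mul_one]
    _ = ∑ j : Fin (k + 1),
        algebraMap D K (w j) * algebraMap D K (p j) * (a j * algebraMap D K (u j)) := by
      rw [map_sum, Finset.mul_sum]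
      refine Finset.sum_congr rfl fun j _ => ?_
      rw [map_mul]
      conv_lhs => rw [hp j (by omega)]
      ring
    _ = _ := by
      rw [map_sum, Finset.mul_sum]
      refine Finset.sum_congr rfl fun j _ => ?_
      rw [hrow j, map_mul, map_mul]
      ring

/-- The first `m` columns of the identity matrix of size `m + z`. -/
def stackInl (D : Type*) [CommRing D] (m z : ℕ) : Matrix (Fin (m + z)) (Fin m) D :=
  (1 : Matrix (Fin (m + z)) (Fin (m + z)) D).submatrix id (Fin.castAdd z)

theorem stack_eq_add {z : ℕ} (R : Matrix (Fin m) (Fin n) K) (W : Matrix (Fin z) (Fin n) K) :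
    stack R W = (stackInl D m z).map (algebraMap D K) * R +
      (1 : Matrix (Fin (m + z)) (Fin (m + z)) K).submatrix id (Fin.natAdd m) * W := by
  ext i j
  refine Fin.addCases (fun i => ?_) (fun i => ?_) i
  · have h₁ : ∀ l : Fin z, (i : ℕ) ≠ m + l := fun l => by omega
    have h₂ : ∀ l : Fin z, Fin.castAdd z i ≠ Fin.natAdd m l := fun l h =>
      h₁ l (congrArg Fin.val h)
    simp [stack, stackInl, Matrix.mul_apply, Matrix.one_apply, apply_ite, h₂]
  · have h₁ : ∀ l : Fin m, m + (i : ℕ) ≠ l := fun l => by omega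
    have h₂ : ∀ l : Fin m, Fin.natAdd m i ≠ Fin.castAdd z l := fun l h =>
      h₁ l (congrArg Fin.val h)
    simp [stack, stackInl, Matrix.mul_apply, Matrix.one_apply, h₂]

theorem HasRankApprox.stack {z k : ℕ} {g : K} {R : Matrix (Fin m) (Fin n) K}
    (h : HasRankApprox D R k g) (W : Matrix (Fin z) (Fin n) K) :
    HasRankApprox D (_root_.stack R W) (k + z) g := by
  rw [stack_eq_add (D := D)]
  exact (h.mul_left _).add_rank ((Matrix.rank_mul_le_right _ _).trans (Matrix.rank_le_height W))

theorem transpose_stackInl_mul_stack {z : ℕ} (R : Matrix (Fin m) (Fin n) K)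
    (W : Matrix (Fin z) (Fin n) K) :
    (stackInl D m z).transpose.map (algebraMap D K) * stack R W = R := by
  have : (stackInl D m z).transpose.map (algebraMap D K) =
      (1 : Matrix (Fin (m + z)) (Fin (m + z)) K).submatrix (Fin.castAdd z) id := by
    ext i j
    simp [stackInl, Matrix.one_apply, apply_ite, eq_comm]
  rw [this]
  ext i j
  simp only [Matrix.mul_apply, Matrix.submatrix_apply, Matrix.one_apply, id_eq, ite_mul, one_mul,
    zero_mul, Finset.sum_ite_eq, Finset.mem_univ, if_true]
  simp [stack]

end Approximation


section InvRatFns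

variable {F : Type*} [Field F] {m n r : ℕ} {ε ψ : ℕ → Polynomial F}

/-- The `i`-th invariant rational function, indexed from `0`. -/
def invRatFn {F : Type*} [Field F] (ε ψ : ℕ → Polynomial F) (i : ℕ) : RatFunc F :=
  ratOf (ε (i + 1)) / ratOf (ψ (i + 1))

theorem ratOf_ne_zero {p : Polynomial F} (hp : p.Monic) : ratOf p ≠ 0 :=
  RatFunc.algebraMap_ne_zero hp.ne_zero

theorem HasInvRatFns.exists_invRatFn_eq_mul {R : Matrix (Fin m) (Fin n) (RatFunc F)}
    (h : HasInvRatFns R r ε ψ) {i j : ℕ} (hij : i ≤ j) (hj : j < r) :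
    ∃ p : Polynomial F,
      invRatFn ε ψ j = invRatFn ε ψ i * algebraMap (Polynomial F) (RatFunc F) p := by
  induction j, hij using Nat.le_induction with
  | base => exact ⟨1, by simp⟩
  | succ j hij ih =>
    obtain ⟨p, hp⟩ := ih (by omega)
    obtain ⟨⟨c, hc⟩, ⟨d, hd⟩⟩ := h.2.1 (j + 1) (by omega) (by omega)
    refine ⟨p * (c * d), ?_⟩
    have h₁ := ratOf_ne_zero (h.1 (j + 1) (by omega) (by omega)).2.1
    have h₂ := ratOf_ne_zero (h.1 (j + 1 + 1) (by omega) (by omega)).2.1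
    rw [map_mul, ← mul_assoc, ← hp]
    unfold invRatFn
    rw [div_mul_eq_mul_div, div_eq_div_iff h₂ h₁, hc, hd]
    simp only [ratOf, map_mul]
    ring

theorem HasInvRatFns.exists_equiv_rectDiagonal {R : Matrix (Fin m) (Fin n) (RatFunc F)}
    (h : HasInvRatFns R r ε ψ) :
    ∃ (U : Matrix (Fin m) (Fin m) (Polynomial F)) (V : Matrix (Fin n) (Fin n) (Polynomial F)),
      IsUnit U.det ∧ IsUnit V.det ∧
      U.map (algebraMap (Polynomial F) (RatFunc F)) * R *
        V.map (algebraMap (Polynomial F) (RatFunc F)) = rectDiagonal m n r (invRatFn ε ψ) := by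
  obtain ⟨U, V, hU, hV, hUV⟩ := h.2.2
  exact ⟨U, V, hU, hV, hUV⟩

theorem HasInvRatFns.hasRankApprox {R : Matrix (Fin m) (Fin n) (RatFunc F)}
    (h : HasInvRatFns R r ε ψ) (k : ℕ) :
    HasRankApprox (Polynomial F) R k (invRatFn ε ψ k) := by
  obtain ⟨U, V, hU, hV, hUV⟩ := h.exists_equiv_rectDiagonal
  exact hasRankApprox_of_equiv_rectDiagonal
    (fun _ hkj hj => h.exists_invRatFn_eq_mul hkj hj) hU hV hUV

theorem HasInvRatFns.dvd_of_hasRankApprox {R : Matrix (Fin m) (Fin n) (RatFunc F)}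
    (h : HasInvRatFns R r ε ψ) (hr : R.rank = r) {k : ℕ} (hk : k < r) {g : RatFunc F}
    (hg : HasRankApprox (Polynomial F) R k g) :
    ∃ p : Polynomial F, invRatFn ε ψ k = g * algebraMap (Polynomial F) (RatFunc F) p := by
  obtain ⟨U, V, hU, hV, hUV⟩ := h.exists_equiv_rectDiagonal
  have hg' := (hg.mul_left U).mul_right V
  rw [hUV] at hg'
  exact hg'.dvd_of_rectDiagonal hk (hr ▸ Matrix.rank_le_height R) (hr ▸ Matrix.rank_le_width R)
    fun _ hj => h.exists_invRatFn_eq_mul hj hk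

/-- Divisibility of irreducible fractions splits into numerators and denominators. -/
theorem dvd_and_dvd_of_ratOf_div_eq {a b c d p : Polynomial F} (hb : b.Monic) (hd : d.Monic)
    (hab : IsCoprime a b) (hcd : IsCoprime c d)
    (h : ratOf a / ratOf b = ratOf c / ratOf d * algebraMap (Polynomial F) (RatFunc F) p) :
    c ∣ a ∧ b ∣ d := by
  rw [div_mul_eq_mul_div, div_eq_div_iff (ratOf_ne_zero hb) (ratOf_ne_zero hd)] at h
  have h' : a * d = c * p * b := by
    apply RatFunc.algebraMap_injective F
    simpa only [ratOf, map_mul] using h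
  exact ⟨hcd.dvd_of_dvd_mul_right ⟨p * b, by rw [h']; ring⟩,
    hab.symm.dvd_of_dvd_mul_left ⟨c * p, by rw [h']; ring⟩⟩

end InvRatFns

/-- Interlacing necessity for the finite structure under row completion:
ε_i | η_i | ε_{i+z} and ψ_{i+z} | φ_i | ψ_i for 1 ≤ i ≤ r, with the conventions
ε_j = 0 and ψ_j = 1 for j > r + x. -/
theorem stmt17 {F : Type*} [Field F] {m n r z x : ℕ} (hxz : x ≤ z) (hxnr : x ≤ n - r)
    (R : Matrix (Fin m) (Fin n) (RatFunc F)) (hrank : R.rank = r)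
    (η φ : ℕ → Polynomial F) (hR : HasInvRatFns R r η φ)
    (W : Matrix (Fin z) (Fin n) (RatFunc F))
    (hQrank : (stack R W).rank = r + x)
    (ε ψ : ℕ → Polynomial F) (hQ : HasInvRatFns (stack R W) (r + x) ε ψ) :
    ∀ i, 1 ≤ i → i ≤ r →
      ε i ∣ η i ∧
      η i ∣ (if i + z ≤ r + x then ε (i + z) else 0) ∧
      (if i + z ≤ r + x then ψ (i + z) else 1) ∣ φ i ∧
      φ i ∣ ψ i := by
  intro i hi hir
  obtain ⟨k, rfl⟩ := Nat.exists_eq_add_of_le' hi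
  obtain ⟨-, hφ, hηφ⟩ := hR.1 (k + 1) hi hir
  obtain ⟨-, hψ, hεψ⟩ := hQ.1 (k + 1) hi (by omega)
  have hRapprox := (hQ.hasRankApprox k).mul_left (stackInl (Polynomial F) m z).transpose
  rw [transpose_stackInl_mul_stack] at hRapprox
  obtain ⟨p, hp⟩ := hR.dvd_of_hasRankApprox hrank hir hRapprox
  obtain ⟨hε, hφψ⟩ := dvd_and_dvd_of_ratOf_div_eq hφ hψ hηφ hεψ hp
  refine ⟨hε, ?_⟩
  split_ifs with hz
  · obtain ⟨q, hq⟩ := hQ.dvd_of_hasRankApprox hQrank (k := k + z) (by omega)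
      ((hR.hasRankApprox k).stack W)
    rw [invRatFn, add_right_comm] at hq
    obtain ⟨-, hψz, hεψz⟩ := hQ.1 (k + 1 + z) (by omega) hz
    obtain ⟨hη, hψφ⟩ := dvd_and_dvd_of_ratOf_div_eq hψz hφ hεψz hηφ hq
    exact ⟨hη, hψφ, hφψ⟩
  · exact ⟨dvd_zero _, one_dvd _, hφψ⟩
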